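/- Let $\Gamma$ be a finite distance-regular graph of diameter $D \ge 2$ and valency $k \ge 2$ (that is, a connected finite simple graph such that for all $0 \le h,i,j \le D$ the number of vertices $z$ with $d(x,z)=i$ and $d(y,z)=j$ is the same for all pairs of vertices $x,y$ at distance $h$). For a nonzero real number $q$, the $q$-distance matrix $\mathbb{D}_q$ of $\Gamma$ is the real symmetric matrix indexed by the vertices with $(\mathbb{D}_q)_{xy} = \sum_{j=0}^{d(x,y)-1} q^{-j}$ for $x \ne y$ and $(\mathbb{D}_q)_{xx} = 0$. Let $x$ be a vertex of $\Gamma$, and let $\Delta(x)$ be the local graph of $x$, i.e., the subgraph of $\Gamma$ induced on the neighbors of $x$. Eigenvalues are counted with multiplicity. (i) If $\mathbb{D}_q$ has exactly one positive eigenvalue for some real $q > 0$, then the smallest eigenvalue $\lambda_{\min}$ of the adjacency matrix of $\Delta(x)$ satisfies $\lambda_{\min} \ge -q-1$. (ii) If $\mathbb{D}_q$ has exactly one positive eigenvalue for some real $q < 0$, then the second largest eigenvalue $\lambda_2$ of the adjacency matrix of $\Delta(x)$ satisfies $\lambda_2 \le -q-1$. -/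

import Mathlib

/-- A finite connected graph `G` is distance-regular if for all `h, i, j` between `0` and the
diameter there is a constant `p^h_{ij}` such that any two vertices `x, y` at distance `h` have
exactly `p^h_{ij}` vertices `z` with `d(x,z) = i` and `d(y,z) = j`. -/
structure IsDistanceRegular {V : Type*} [Fintype V] (G : SimpleGraph V) : Prop where
  connected : G.Connected
  exists_intersection_number : ∀ h i j : ℕ, h ≤ G.diam → i ≤ G.diam → j ≤ G.diam →
    ∃ p : ℕ, ∀ x y : V, G.dist x y = h →
      (Finset.univ.filter fun z : V => G.dist x z = i ∧ G.dist y z = j).card = p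

/-- The `q`-distance matrix of `G`: the `(x,y)` entry is `∑_{j=0}^{d(x,y)-1} q^{-j}`; the empty
sum gives `0` on the diagonal. -/
noncomputable def qDistMatrix {V : Type*} (G : SimpleGraph V) (q : ℝ) : Matrix V V ℝ :=
  Matrix.of fun x y => ∑ j ∈ Finset.range (G.dist x y), q⁻¹ ^ j

theorem qDistMatrix_isHermitian {V : Type*} (G : SimpleGraph V) (q : ℝ) :
    (qDistMatrix G q).IsHermitian := by
  ext x y
  simp [qDistMatrix, G.dist_comm]

theorem adjMatrix_isHermitian {V : Type*} (G : SimpleGraph V) [DecidableRel G.Adj] :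
    (G.adjMatrix ℝ).IsHermitian := by
  ext x y
  simp [SimpleGraph.adjMatrix_apply, G.adj_comm]

/-- Exactly one eigenvalue, counted with multiplicity, is positive. -/
def HasExactlyOnePosEigenvalue {n : Type*} [Fintype n] [DecidableEq n] (M : Matrix n n ℝ)
    (hM : M.IsHermitian) : Prop :=
  (Finset.univ.filter fun i : n => 0 < hM.eigenvalues i).card = 1

/-- The smallest eigenvalue of a symmetric matrix of order at least `1`: the last entry of the
list `hM.eigenvalues₀` of its eigenvalues with multiplicity in nonincreasing order. -/
noncomputable def smallestEigenvalue {n : Type*} [Fintype n] [DecidableEq n] (M : Matrix n n ℝ)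
    (hM : M.IsHermitian) (hn : 1 ≤ Fintype.card n) : ℝ :=
  hM.eigenvalues₀ ⟨Fintype.card n - 1, Nat.sub_lt hn Nat.one_pos⟩

/-- The second largest eigenvalue of a symmetric matrix of order at least `2`: the second entry of
the list `hM.eigenvalues₀` of its eigenvalues with multiplicity in nonincreasing order. -/
noncomputable def secondLargestEigenvalue {n : Type*} [Fintype n] [DecidableEq n]
    (M : Matrix n n ℝ) (hM : M.IsHermitian) (hn : 2 ≤ Fintype.card n) : ℝ :=
  hM.eigenvalues₀ ⟨1, hn⟩

/-- The local graph of `G` at `x`: the subgraph induced on the neighbors of `x`. -/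
abbrev localGraph {V : Type*} (G : SimpleGraph V) (x : V) : SimpleGraph (G.neighborSet x) :=
  G.induce (G.neighborSet x)

theorem two_le_card_neighborSet {V : Type*} [Fintype V] {G : SimpleGraph V} [DecidableRel G.Adj]
    {k : ℕ} (hreg : G.IsRegularOfDegree k) (hk : 2 ≤ k) (x : V) :
    2 ≤ Fintype.card (G.neighborSet x) := by
  rw [G.card_neighborSet_eq_degree, hreg.degree_eq]
  exact hk

/-!
Write `M` for the `q`-distance matrix and restrict its quadratic form to vectors supported on the
neighbors of `x`. Two neighbors are at distance at most `2`, so this restriction is an affine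
combination of the identity, the all-ones matrix and the local adjacency matrix `A`. The basis
vector at `x` is isotropic for `M`, is not in the radical, and pairs with a vector `v` on the
neighbors to `∑ v`. A form with a single positive eigenvalue is nonpositive on the orthogonal
complement of such a vector, by the reverse Cauchy–Schwarz inequality, so `M` is nonpositive on
zero-sum `v`, that is, `q⁻¹ (v ⬝ᵥ A v + (q + 1) v ⬝ᵥ v) ≥ 0`. For `q > 0` this applies to an
eigenvector of `A` for a negative eigenvalue, which is orthogonal to the all-ones vector because the
local graph is regular. For `q < 0` it bounds `A` from above on a hyperplane, and Courant–Fischer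
bounds its second largest eigenvalue.
-/

open Matrix

/-- A symmetric bilinear form with at most one positive square in its diagonalizations, as for the
Hessians of Lorentzian polynomials. It is encoded by a linear functional on whose kernel the form is
nonpositive, so that semidefinite and degenerate forms are allowed. -/
structure IsLorentzian {K E : Type*} [Field K] [LinearOrder K] [AddCommGroup E] [Module K E]
    (B : LinearMap.BilinForm K E) : Prop where
  isSymm : B.IsSymm
  exists_nonpos_on_ker : ∃ f : E →ₗ[K] K, ∀ y, f y = 0 → B y y ≤ 0

namespace IsLorentzian

variable {K E : Type*} [Field K] [LinearOrder K] [IsStrictOrderedRing K] [AddCommGroup E]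
  [Module K E] {B : LinearMap.BilinForm K E}

theorem apply_self_mul_apply_self_le_sq (hB : IsLorentzian B) (u : E) {w : E} (hw : 0 < B w w) :
    B u u * B w w ≤ B u w ^ 2 := by
  obtain ⟨f, hf⟩ := hB.exists_nonpos_on_ker
  have hfw : f w ≠ 0 := fun h => (hf w h).not_gt hw
  set s := f u / f w
  have hs : f (u - s • w) = 0 := by simp [s, hfw]
  have hexpand : B (u - s • w) (u - s • w) = B u u - 2 * s * B u w + s ^ 2 * B w w := by
    simp only [map_sub, map_smul, LinearMap.sub_apply, LinearMap.smul_apply, smul_eq_mul,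
      hB.isSymm.eq w u]
    ring
  nlinarith [hf _ hs, sq_nonneg (s * B w w - B u w)]

theorem apply_self_nonpos_of_apply_eq_zero (hB : IsLorentzian B) {u v z : E} (hu : 0 ≤ B u u)
    (huz : B u z ≠ 0) (huv : B u v = 0) : B v v ≤ 0 := by
  by_contra! hv
  -- Along `z + t • u` the pairing with `v` is constant, while the form is unbounded above.
  obtain ⟨t, ht⟩ : ∃ t : K, B z v ^ 2 < (B z z + 2 * t * B u z) * B v v :=
    ⟨(B z v ^ 2 / B v v + 1 - B z z) / (2 * B u z), by field_simp; linarith⟩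
  have hpair : B (z + t • u) v = B z v := by simp [huv]
  have hexpand : B (z + t • u) (z + t • u) = B z z + 2 * t * B u z + t ^ 2 * B u u := by
    simp only [map_add, map_smul, LinearMap.add_apply, LinearMap.smul_apply, smul_eq_mul,
      hB.isSymm.eq z u]
    ring
  have hcs := hB.apply_self_mul_apply_self_le_sq (z + t • u) hv
  rw [hpair, hexpand] at hcs
  nlinarith [mul_nonneg (mul_nonneg (sq_nonneg t) hu) hv.le]

end IsLorentzian

theorem toBilin'_sum_smul_single {R m n : Type*} [CommSemiring R] [Fintype m] [Fintype n]
    [DecidableEq n] (M : Matrix n n R) (f : m → n) (v w : m → R) :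
    M.toBilin' (∑ y, v y • Pi.single (f y) 1) (∑ y, w y • Pi.single (f y) 1) =
      v ⬝ᵥ M.submatrix f f *ᵥ w := by
  simp only [map_sum, map_smul, LinearMap.sum_apply, LinearMap.smul_apply, toBilin'_single,
    smul_eq_mul, dotProduct, mulVec, submatrix_apply, Finset.mul_sum]
  rw [Finset.sum_comm]
  exact Finset.sum_congr rfl fun y _ => Finset.sum_congr rfl fun z _ => by ring

theorem IsLorentzian.dotProduct_submatrix_mulVec_nonpos {K m n : Type*} [Field K] [LinearOrder K]
    [IsStrictOrderedRing K] [Fintype m] [Fintype n] [DecidableEq n] {M : Matrix n n K}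
    (hM : IsLorentzian M.toBilin') (f : m → n) {x z : n} (hx : 0 ≤ M x x) (hxz : M x z ≠ 0)
    {v : m → K} (hv : ∑ y, v y * M x (f y) = 0) : v ⬝ᵥ M.submatrix f f *ᵥ v ≤ 0 := by
  rw [← toBilin'_sum_smul_single]
  refine hM.apply_self_nonpos_of_apply_eq_zero (u := Pi.single x 1) (z := Pi.single z 1) ?_ ?_ ?_
  · rwa [toBilin'_single]
  · rwa [toBilin'_single]
  · simpa only [map_sum, map_smul, toBilin'_single, smul_eq_mul] using hv

section Eigenvalues

variable {n : Type*} [Fintype n] [DecidableEq n] {M : Matrix n n ℝ}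

theorem sum_eigenvectorBasis_dotProduct_mul (hM : M.IsHermitian) (u w : n → ℝ) :
    ∑ i, (hM.eigenvectorBasis i ⬝ᵥ u) * (hM.eigenvectorBasis i ⬝ᵥ w) = u ⬝ᵥ w := by
  simpa [EuclideanSpace.inner_eq_star_dotProduct, dotProduct_comm] using
    hM.eigenvectorBasis.sum_inner_mul_inner (WithLp.toLp 2 u) (WithLp.toLp 2 w)

theorem eigenvectorBasis_dotProduct_eigenvectorBasis (hM : M.IsHermitian) (i j : n) :
    hM.eigenvectorBasis i ⬝ᵥ hM.eigenvectorBasis j = if i = j then (1 : ℝ) else 0 := by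
  simpa [EuclideanSpace.inner_eq_star_dotProduct, dotProduct_comm] using
    orthonormal_iff_ite.mp hM.eigenvectorBasis.orthonormal i j

theorem eigenvectorBasis_dotProduct_mulVec (hM : M.IsHermitian) (i : n) (y : n → ℝ) :
    hM.eigenvectorBasis i ⬝ᵥ M *ᵥ y = hM.eigenvalues i * (hM.eigenvectorBasis i ⬝ᵥ y) := by
  have hT : Mᵀ = M := isHermitian_iff_isSymm.mp hM
  rw [dotProduct_mulVec, ← mulVec_transpose, hT, hM.mulVec_eigenvectorBasis, smul_dotProduct,
    smul_eq_mul]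

theorem dotProduct_mulVec_self_eq_sum_eigenvalues (hM : M.IsHermitian) (y : n → ℝ) :
    y ⬝ᵥ M *ᵥ y = ∑ i, hM.eigenvalues i * (hM.eigenvectorBasis i ⬝ᵥ y) ^ 2 := by
  rw [← sum_eigenvectorBasis_dotProduct_mul hM]
  refine Finset.sum_congr rfl fun i _ => ?_
  rw [eigenvectorBasis_dotProduct_mulVec]
  ring

theorem HasExactlyOnePosEigenvalue.isLorentzian_toBilin' {hM : M.IsHermitian}
    (h : HasExactlyOnePosEigenvalue M hM) : IsLorentzian M.toBilin' where
  isSymm := isSymm_toBilin'_iff_isSymm.mpr (isHermitian_iff_isSymm.mp hM)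
  exists_nonpos_on_ker := by
    obtain ⟨i, hi⟩ := Finset.card_eq_one.mp h
    have hnonpos : ∀ j ≠ i, hM.eigenvalues j ≤ 0 := fun j hj => not_lt.mp fun hpos =>
      hj (by simpa [hpos] using Finset.ext_iff.mp hi j)
    refine ⟨dotProductBilin ℝ ℝ (hM.eigenvectorBasis i).ofLp, fun y hy => ?_⟩
    rw [toBilin'_apply', dotProduct_mulVec_self_eq_sum_eigenvalues hM]
    refine Finset.sum_nonpos fun j _ => ?_
    obtain rfl | hj := eq_or_ne j i
    · simp_all
    · exact mul_nonpos_of_nonpos_of_nonneg (hnonpos j hj) (sq_nonneg _)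

theorem eigenvalues_equivOfCardEq (hM : M.IsHermitian) (i : Fin (Fintype.card n)) :
    hM.eigenvalues (Fintype.equivOfCardEq (Fintype.card_fin _) i) = hM.eigenvalues₀ i := by
  simp [IsHermitian.eigenvalues]

theorem exists_eigenvalues_eq_smallestEigenvalue (hM : M.IsHermitian)
    (hn : 1 ≤ Fintype.card n) : ∃ i, hM.eigenvalues i = smallestEigenvalue M hM hn :=
  ⟨_, eigenvalues_equivOfCardEq hM _⟩

theorem exists_ne_secondLargestEigenvalue_le (hM : M.IsHermitian) (hn : 2 ≤ Fintype.card n) :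
    ∃ i j, i ≠ j ∧ secondLargestEigenvalue M hM hn ≤ hM.eigenvalues i ∧
      secondLargestEigenvalue M hM hn ≤ hM.eigenvalues j := by
  let i : Fin (Fintype.card n) := ⟨0, by lia⟩
  let j : Fin (Fintype.card n) := ⟨1, hn⟩
  have hij : i ≤ j := Fin.mk_le_mk.mpr zero_le_one
  refine ⟨_, _, (Fintype.equivOfCardEq (Fintype.card_fin _)).injective.ne
    (show i ≠ j by simp [i, j]), ?_, ?_⟩
  · exact (hM.eigenvalues₀_antitone hij).trans_eq (eigenvalues_equivOfCardEq hM i).symm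
  · exact (eigenvalues_equivOfCardEq hM j).ge

theorem secondLargestEigenvalue_le_of_forall_dotProduct_eq_zero (hM : M.IsHermitian)
    (hn : 2 ≤ Fintype.card n) (e : n → ℝ) {c : ℝ}
    (h : ∀ v, e ⬝ᵥ v = 0 → v ⬝ᵥ M *ᵥ v ≤ c * (v ⬝ᵥ v)) :
    secondLargestEigenvalue M hM hn ≤ c := by
  obtain ⟨i, j, hij, hi, hj⟩ := exists_ne_secondLargestEigenvalue_le hM hn
  set b : n → n → ℝ := fun i => hM.eigenvectorBasis i
  have hb (i j : n) : b i ⬝ᵥ b j = if i = j then 1 else 0 :=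
    eigenvectorBasis_dotProduct_eigenvectorBasis hM i j
  obtain ⟨s, t, hst, hpos⟩ :
      ∃ s t : ℝ, s * (e ⬝ᵥ b i) + t * (e ⬝ᵥ b j) = 0 ∧ 0 < s ^ 2 + t ^ 2 := by
    by_cases hej : e ⬝ᵥ b j = 0
    · exact ⟨0, 1, by simp [hej], by simp⟩
    · exact ⟨e ⬝ᵥ b j, -(e ⬝ᵥ b i), by ring, by positivity⟩
  have hnorm : (s • b i + t • b j) ⬝ᵥ (s • b i + t • b j) = s ^ 2 + t ^ 2 := by
    simp [hb, hij, hij.symm, sq]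
  have hform : (s • b i + t • b j) ⬝ᵥ M *ᵥ (s • b i + t • b j) =
      hM.eigenvalues i * s ^ 2 + hM.eigenvalues j * t ^ 2 := by
    have hMb (i : n) : M *ᵥ b i = hM.eigenvalues i • b i := hM.mulVec_eigenvectorBasis i
    simp only [mulVec_add, mulVec_smul, hMb, add_dotProduct, dotProduct_add, smul_dotProduct,
      dotProduct_smul, smul_eq_mul, hb, hij, hij.symm, if_true, if_false]
    ring
  have hbound := h (s • b i + t • b j) (by simpa using hst)
  rw [hnorm, hform] at hbound
  refine le_of_mul_le_mul_right (le_trans ?_ hbound) hpos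
  rw [mul_add]
  gcongr

end Eigenvalues

theorem one_dotProduct_eq_zero_of_adjMatrix_mulVec_eq_smul {R W : Type*} [CommRing R] [IsDomain R]
    [Fintype W] {H : SimpleGraph W} [DecidableRel H.Adj] {a : ℕ} (hH : H.IsRegularOfDegree a)
    {θ : R} (hθ : θ ≠ a) {v : W → R} (hv : H.adjMatrix R *ᵥ v = θ • v) : 1 ⬝ᵥ v = 0 := by
  have hone : 1 ᵥ* H.adjMatrix R = (a : R) • 1 := by
    ext y
    simp [hH.degree_eq y]
  have hpair : θ * (1 ⬝ᵥ v) = a * (1 ⬝ᵥ v) := by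
    rw [← smul_eq_mul, ← dotProduct_smul, ← hv, dotProduct_mulVec, hone, smul_dotProduct,
      smul_eq_mul]
  exact (mul_eq_mul_right_iff.mp hpair).resolve_left hθ

section LocalGraph

variable {V : Type*} {G : SimpleGraph V}

theorem IsDistanceRegular.exists_localGraph_isRegularOfDegree [Fintype V] [DecidableRel G.Adj]
    (hG : IsDistanceRegular G) (hD : 1 ≤ G.diam) (x : V) :
    ∃ a, (localGraph G x).IsRegularOfDegree a := by
  obtain ⟨a, ha⟩ := hG.exists_intersection_number 1 1 1 hD hD hD
  refine ⟨a, fun y => ?_⟩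
  rw [← ha x y (SimpleGraph.dist_eq_one_iff_adj.mpr y.2),
    ← SimpleGraph.card_neighborFinset_eq_degree, ← Finset.card_map (Function.Embedding.subtype _)]
  congr 1
  ext z
  simp [SimpleGraph.dist_eq_one_iff_adj, and_comm]

theorem qDistMatrix_apply_of_adj (q : ℝ) {x y : V} (h : G.Adj x y) : qDistMatrix G q x y = 1 := by
  simp [qDistMatrix, SimpleGraph.dist_eq_one_iff_adj.mpr h]

variable [DecidableEq V] [DecidableRel G.Adj]

theorem qDistMatrix_submatrix_neighborSet (q : ℝ) (x : V) :
    (qDistMatrix G q).submatrix (Subtype.val : G.neighborSet x → V) Subtype.val =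
      (1 + q⁻¹) • (vecMulVec 1 1 - 1) - q⁻¹ • (localGraph G x).adjMatrix ℝ := by
  ext y z
  by_cases hyz : y = z
  · simp [qDistMatrix, hyz]
  by_cases hadj : G.Adj y z
  · simp [qDistMatrix_apply_of_adj q hadj, hyz, hadj]
  · have hedist : G.edist y z = 2 := SimpleGraph.edist_eq_two_iff.mpr
      ⟨Subtype.coe_ne_coe.mpr hyz, hadj, x, G.adj_symm y.2, G.adj_symm z.2⟩
    have hdist : G.dist y z = 2 := by simp [SimpleGraph.dist, hedist]
    simp [qDistMatrix, hdist, hyz, hadj, Finset.sum_range_succ]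

variable [Fintype V]

theorem IsLorentzian.localGraph_quadraticForm_nonneg {q : ℝ} (hq : q ≠ 0) {x : V}
    (hG : IsLorentzian (qDistMatrix G q).toBilin') {v : G.neighborSet x → ℝ} (hv : 1 ⬝ᵥ v = 0) :
    0 ≤ q⁻¹ * (v ⬝ᵥ (localGraph G x).adjMatrix ℝ *ᵥ v + (q + 1) * (v ⬝ᵥ v)) := by
  obtain _ | ⟨⟨z, hz⟩⟩ := isEmpty_or_nonempty (G.neighborSet x)
  · simp [dotProduct]
  have hnonpos := hG.dotProduct_submatrix_mulVec_nonpos (Subtype.val : G.neighborSet x → V)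
    (x := x) (z := z) (v := v) (by simp [qDistMatrix]) (by simp [qDistMatrix_apply_of_adj q hz])
    (by simpa [fun y : G.neighborSet x => qDistMatrix_apply_of_adj q y.2, one_dotProduct] using hv)
  simp only [qDistMatrix_submatrix_neighborSet, sub_mulVec, smul_mulVec, vecMulVec_mulVec, hv,
    one_mulVec, MulOpposite.op_zero, zero_smul, zero_sub, dotProduct_sub, dotProduct_smul,
    dotProduct_neg, smul_eq_mul] at hnonpos
  linear_combination hnonpos - (v ⬝ᵥ v) * inv_mul_cancel₀ hq

theorem IsLorentzian.le_smallestEigenvalue_localGraph {q : ℝ} (hq : 0 < q) {x : V}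
    (hG : IsLorentzian (qDistMatrix G q).toBilin') {a : ℕ}
    (ha : (localGraph G x).IsRegularOfDegree a) (hx : 1 ≤ Fintype.card (G.neighborSet x)) :
    -q - 1 ≤ smallestEigenvalue ((localGraph G x).adjMatrix ℝ)
      (adjMatrix_isHermitian (localGraph G x)) hx := by
  set hA := adjMatrix_isHermitian (localGraph G x)
  obtain ⟨i, hi⟩ := exists_eigenvalues_eq_smallestEigenvalue hA hx
  rw [← hi]
  by_contra! hlt
  have hne : hA.eigenvalues i ≠ a := by linarith [a.cast_nonneg (α := ℝ)]
  have hsum := one_dotProduct_eq_zero_of_adjMatrix_mulVec_eq_smul ha hne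
    (hA.mulVec_eigenvectorBasis i)
  have hbound := nonneg_of_mul_nonneg_right
    (hG.localGraph_quadraticForm_nonneg hq.ne' hsum) (inv_pos.mpr hq)
  rw [eigenvectorBasis_dotProduct_mulVec, eigenvectorBasis_dotProduct_eigenvectorBasis,
    if_pos rfl] at hbound
  linarith

theorem IsLorentzian.secondLargestEigenvalue_localGraph_le {q : ℝ} (hq : q < 0) {x : V}
    (hG : IsLorentzian (qDistMatrix G q).toBilin') (hx : 2 ≤ Fintype.card (G.neighborSet x)) :
    secondLargestEigenvalue ((localGraph G x).adjMatrix ℝ)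
      (adjMatrix_isHermitian (localGraph G x)) hx ≤ -q - 1 := by
  refine secondLargestEigenvalue_le_of_forall_dotProduct_eq_zero _ hx 1 fun v hv => ?_
  have hbound := nonpos_of_mul_nonneg_right (hG.localGraph_quadraticForm_nonneg hq.ne hv)
    (inv_lt_zero.mpr hq)
  linarith

end LocalGraph

theorem stmt17_general {V : Type*} [Fintype V] [DecidableEq V] (G : SimpleGraph V)
    [DecidableRel G.Adj] (x : V) (hx : 2 ≤ Fintype.card (G.neighborSet x)) :
    (∀ a : ℕ, (localGraph G x).IsRegularOfDegree a → ∀ q : ℝ, 0 < q →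
      HasExactlyOnePosEigenvalue (qDistMatrix G q) (qDistMatrix_isHermitian G q) →
      smallestEigenvalue ((localGraph G x).adjMatrix ℝ)
        (adjMatrix_isHermitian (localGraph G x)) (one_le_two.trans hx) ≥ -q - 1) ∧
    (∀ q : ℝ, q < 0 →
      HasExactlyOnePosEigenvalue (qDistMatrix G q) (qDistMatrix_isHermitian G q) →
      secondLargestEigenvalue ((localGraph G x).adjMatrix ℝ)
        (adjMatrix_isHermitian (localGraph G x)) hx ≤ -q - 1) :=
  ⟨fun _ ha _ hq h => h.isLorentzian_toBilin'.le_smallestEigenvalue_localGraph hq ha _,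
    fun _ hq h => h.isLorentzian_toBilin'.secondLargestEigenvalue_localGraph_le hq hx⟩

/-- Let `G` be a distance-regular graph of diameter at least `2` and valency `k ≥ 2`, and let `x`
be a vertex. If the `q`-distance matrix of `G` has exactly one positive eigenvalue, then the
smallest eigenvalue of the local graph at `x` is at least `-q - 1` when `q > 0`, and the second
largest eigenvalue of the local graph at `x` is at most `-q - 1` when `q < 0`. -/
theorem stmt17 {V : Type*} [Fintype V] [DecidableEq V] (G : SimpleGraph V) [DecidableRel G.Adj]
    (hG : IsDistanceRegular G) (hD : 2 ≤ G.diam)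
    (k : ℕ) (hreg : G.IsRegularOfDegree k) (hk : 2 ≤ k) (x : V) :
    (∀ q : ℝ, 0 < q →
      HasExactlyOnePosEigenvalue (qDistMatrix G q) (qDistMatrix_isHermitian G q) →
      smallestEigenvalue ((localGraph G x).adjMatrix ℝ)
        (adjMatrix_isHermitian (localGraph G x))
        (one_le_two.trans (two_le_card_neighborSet hreg hk x)) ≥ -q - 1) ∧
    (∀ q : ℝ, q < 0 →
      HasExactlyOnePosEigenvalue (qDistMatrix G q) (qDistMatrix_isHermitian G q) →
      secondLargestEigenvalue ((localGraph G x).adjMatrix ℝ)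
        (adjMatrix_isHermitian (localGraph G x))
        (two_le_card_neighborSet hreg hk x) ≤ -q - 1) := by
  obtain ⟨a, ha⟩ := hG.exists_localGraph_isRegularOfDegree (one_le_two.trans hD) x
  exact (stmt17_general G x (two_le_card_neighborSet hreg hk x)).imp_left fun h => h a ha
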